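/- Let B be a symplectic form on a 2J-dimensional vector space V over F_2 with J > 4, and let D ⊆ V be an affine quadric with #D = 2^{J−1}(2^J+1). Let Ψ̂_D = (ψ̂_v)_{v∈D} be a family of vectors in a real inner product space with ⟨ψ̂_v, ψ̂_v⟩ = 2^{J−1} + 1 for all v ∈ D and ⟨ψ̂_{v₁}, ψ̂_{v₂}⟩ = (−1)^{B(v₁,v₂)} for distinct v₁, v₂ ∈ D (such a family is an ETF of 2^{J−1}(2^J+1) vectors for a space of dimension (2^{J−1}+1)(2^J+1)/3). Then bin(Ψ̂_D) is empty; equivalently, there is no subset K ⊆ D with #K = 2^{J−1} + 2 such that B(v₁+v₃, v₂+v₃) = 1 for all pairwise distinct v₁, v₂, v₃ ∈ K. -/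

import Mathlib

open scoped BigOperators

noncomputable section

/-- ETF predicate. -/
def IsETF (𝕜 : Type*) {E ι : Type*} [RCLike 𝕜] [NormedAddCommGroup E]
    [InnerProductSpace 𝕜 E] [Fintype ι] (φ : ι → E) : Prop :=
  (∃ S : ℝ, 0 < S ∧ ∀ n, (inner 𝕜 (φ n) (φ n) : 𝕜) = (S : 𝕜)) ∧
  (∃ C : ℝ, 0 < C ∧ ∀ n₁ n₂, n₁ ≠ n₂ → ‖(inner 𝕜 (φ n₁) (φ n₂) : 𝕜)‖ = C) ∧
  (∃ A : ℝ, 0 < A ∧ ∀ n₁ n₃,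
      (∑ n₂, (inner 𝕜 (φ n₁) (φ n₂) : 𝕜) * (inner 𝕜 (φ n₂) (φ n₃) : 𝕜)) =
        (A : 𝕜) * (inner 𝕜 (φ n₁) (φ n₃) : 𝕜))

/-- Regular simplex predicate for a subfamily. -/
def IsRegularSimplex (𝕜 : Type*) {E ι : Type*} [RCLike 𝕜] [NormedAddCommGroup E]
    [InnerProductSpace 𝕜 E] [Fintype ι] (φ : ι → E) (K : Finset ι) : Prop :=
  IsETF 𝕜 (fun k : K => φ k.1) ∧
  Module.finrank 𝕜 (Submodule.span 𝕜 (φ '' (K : Set ι))) + 1 = K.card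

/-- The binder of a family. -/
def binder (𝕜 : Type*) {E ι : Type*} [RCLike 𝕜] [NormedAddCommGroup E]
    [InnerProductSpace 𝕜 E] [Fintype ι] (φ : ι → E) : Set (Finset ι) :=
  {K | IsRegularSimplex 𝕜 φ K}

/-- A bilinear form is symplectic: alternating and nondegenerate. -/
def IsSymplectic {F V : Type*} [CommRing F] [AddCommGroup V] [Module F V]
    (B : V →ₗ[F] V →ₗ[F] F) : Prop :=
  (∀ v, B v v = 0) ∧ ∀ v : V, v ≠ 0 → ∃ w, B v w ≠ 0

/-- `Q` is a quadratic form yielding the bilinear form `B` over `F₂`. -/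
def YieldsForm {V : Type*} [AddCommGroup V] [Module (ZMod 2) V]
    (B : V →ₗ[ZMod 2] V →ₗ[ZMod 2] ZMod 2) (Q : V → ZMod 2) : Prop :=
  ∀ v₁ v₂ : V, Q (v₁ + v₂) + Q v₁ + Q v₂ = B v₁ v₂

/-- The quadric of a quadratic form: its set of zeros. -/
def quadric {V : Type*} (Q : V → ZMod 2) : Set V := {v | Q v = 0}

/-- A subset is an affine quadric if it or its complement is the quadric of
some quadratic form yielding `B`. -/
def IsAffineQuadric {V : Type*} [AddCommGroup V] [Module (ZMod 2) V]
    (B : V →ₗ[ZMod 2] V →ₗ[ZMod 2] ZMod 2) (D : Set V) : Prop :=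
  ∃ Q : V → ZMod 2, YieldsForm B Q ∧ (D = quadric Q ∨ D = (quadric Q)ᶜ)

/-!
Let `G` be the Gram matrix of an ETF of `n` vectors spanning a space of dimension `n - 1`, with
`G * G = A • G` and off-diagonal entries of modulus `C`. Then `A • 1 - G` annihilates `G`, so it has
rank one. The trace of `A⁻¹ • G`, an idempotent of rank `n - 1`, and a `2 × 2` minor of `A • 1 - G`
give `A = n * C`, so every vector has squared norm `(n - 1) * C`; the three-cycles of the rank-one
matrix `A • 1 - G` show that every triple product of `G` is `-C ^ 3`. A simplex in `ψ` therefore has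
`2 ^ (J - 1) + 2` vectors, and every triple of its index set is odd for `B`.

On the other hand, let all triples of `K` be odd and pick `a ≠ b` in `K`. The functionals
`B (b + v)` are dual to the vectors `v + a` for `v ∈ K \ {a, b}`, which are therefore independent,
so `K` has at most `2 * J + 2` elements. This is less than `2 ^ (J - 1) + 2` as soon as `J > 4`.
-/

section IdempotentMatrices

open Matrix

variable {m n F : Type*} [Field F]

lemma exists_eq_vecMulVec_of_rank_le_one [Finite m] [Fintype n] {M : Matrix m n F}
    (hM : M.rank ≤ 1) : ∃ (u : m → F) (w : n → F), M = vecMulVec u w := by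
  classical
  obtain ⟨u, hu⟩ := finrank_le_one_iff.1 hM
  choose w hw using fun j ↦ hu ⟨M.mulVecLin (Pi.single j 1), LinearMap.mem_range_self _ _⟩
  refine ⟨u, w, Matrix.ext fun i j ↦ ?_⟩
  have hcol := congrFun (congrArg Subtype.val (hw j)) i
  simpa [vecMulVec_apply, mul_comm] using hcol.symm

variable [Fintype n]

lemma trace_eq_rank_of_isIdempotentElem {P : Matrix n n F} (hP : IsIdempotentElem P) :
    P.trace = P.rank := by
  classical
  have hproj : LinearMap.IsProj P.toLin'.range P.toLin' :=
    LinearMap.IsIdempotentElem.isProj_range _ (hP.map toLinAlgEquiv')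
  rw [← trace_toLin'_eq, hproj.trace]
  rfl

lemma trace_eq_mul_rank_of_mul_self_eq_smul {G : Matrix n n F} {a : F} (ha : a ≠ 0)
    (hG : G * G = a • G) : G.trace = a * G.rank := by
  have hP : IsIdempotentElem (a⁻¹ • G) := by
    rw [IsIdempotentElem, smul_mul_smul_comm, hG, smul_smul, inv_mul_cancel_right₀ ha]
  have htrace := trace_eq_rank_of_isIdempotentElem hP
  rw [trace_smul, smul_eq_mul,
    rank_smul_of_mem_nonZeroDivisors G (mem_nonZeroDivisors_of_ne_zero (inv_ne_zero ha))] at htrace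
  rw [← htrace, mul_inv_cancel_left₀ ha]

lemma exists_smul_one_sub_eq_vecMulVec [DecidableEq n] {G : Matrix n n F} {a : F}
    (hG : G * G = a • G) (hrank : G.rank + 1 = Fintype.card n) :
    ∃ u w : n → F, a • 1 - G = vecMulVec u w := by
  have hmul : G * (a • 1 - G) = 0 := by simp [mul_sub, hG]
  have hle := rank_add_rank_le_card_of_mul_eq_zero hmul
  exact exists_eq_vecMulVec_of_rank_le_one (by omega)

end IdempotentMatrices

section Simplices

open Matrix

variable {𝕜 E ι : Type*} [RCLike 𝕜] [NormedAddCommGroup E] [InnerProductSpace 𝕜 E]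

lemma mul_eq_sub_of_smul_one_sub_gram_eq_vecMulVec [DecidableEq ι] {φ : ι → E} {S A : ℝ}
    (hdiag : ∀ i, inner 𝕜 (φ i) (φ i) = (S : 𝕜)) {u w : ι → 𝕜}
    (huw : (A : 𝕜) • 1 - gram 𝕜 φ = vecMulVec u w) (i : ι) : u i * w i = ((A - S : ℝ) : 𝕜) := by
  calc u i * w i = (A : 𝕜) * (1 : Matrix ι ι 𝕜) i i - inner 𝕜 (φ i) (φ i) :=
        (congrFun₂ huw i i).symm
    _ = ((A - S : ℝ) : 𝕜) := by rw [one_apply_eq, mul_one, hdiag, RCLike.ofReal_sub]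

lemma sub_eq_of_smul_one_sub_gram_eq_vecMulVec [DecidableEq ι] {φ : ι → E} {S C A : ℝ}
    (hdiag : ∀ i, inner 𝕜 (φ i) (φ i) = (S : 𝕜)) {i j : ι} (hij : i ≠ j)
    (hoff : ‖inner 𝕜 (φ i) (φ j)‖ = C) (hSA : S ≤ A) {u w : ι → 𝕜}
    (huw : (A : 𝕜) • 1 - gram 𝕜 φ = vecMulVec u w) : A - S = C := by
  have hentry {k l : ι} (hkl : k ≠ l) : u k * w l = -inner 𝕜 (φ k) (φ l) := by
    simpa [hkl, vecMulVec_apply] using (congrFun₂ huw k l).symm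
  have hself := mul_eq_sub_of_smul_one_sub_gram_eq_vecMulVec hdiag huw
  have hsq : ((A - S : ℝ) : 𝕜) ^ 2 = (C : 𝕜) ^ 2 := by
    calc ((A - S : ℝ) : 𝕜) ^ 2 = (u i * w i) * (u j * w j) := by rw [hself, hself, sq]
      _ = (u i * w j) * (u j * w i) := by ring
      _ = inner 𝕜 (φ i) (φ j) * inner 𝕜 (φ j) (φ i) := by
          rw [hentry hij, hentry hij.symm, neg_mul_neg]
      _ = (C : 𝕜) ^ 2 := by rw [← inner_conj_symm (φ j), RCLike.mul_conj, hoff]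
  have hsq' : (A - S) ^ 2 = C ^ 2 := by exact_mod_cast hsq
  exact (sq_eq_sq₀ (sub_nonneg.2 hSA) (hoff ▸ norm_nonneg _)).1 hsq'

variable [Fintype ι]

lemma ker_mulVecLin_gram (φ : ι → E) :
    LinearMap.ker (gram 𝕜 φ).mulVecLin = LinearMap.ker (Fintype.linearCombination 𝕜 φ) := by
  ext x
  rw [LinearMap.mem_ker, LinearMap.mem_ker, mulVecLin_apply, Fintype.linearCombination_apply]
  constructor
  · intro hx
    rw [← inner_self_eq_zero (𝕜 := 𝕜), ← star_dotProduct_gram_mulVec, hx, dotProduct_zero]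
  · intro hx
    ext i
    calc (gram 𝕜 φ *ᵥ x) i = inner 𝕜 (φ i) (∑ j, x j • φ j) := by
          simp [mulVec, dotProduct, inner_sum, inner_smul_right, mul_comm]
      _ = 0 := by rw [hx, inner_zero_right]

lemma rank_gram (φ : ι → E) :
    (gram 𝕜 φ).rank = Module.finrank 𝕜 (Submodule.span 𝕜 (Set.range φ)) := by
  have hgram := LinearMap.finrank_range_add_finrank_ker (gram 𝕜 φ).mulVecLin
  rw [ker_mulVecLin_gram,
    ← LinearMap.finrank_range_add_finrank_ker (Fintype.linearCombination 𝕜 φ)] at hgram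
  rw [rank, ← Fintype.range_linearCombination]
  exact Nat.add_right_cancel hgram

lemma card_mul_eq_mul_card_sub_one_of_tight {φ : ι → E} {S A : ℝ} (hA : A ≠ 0)
    (hdiag : ∀ i, inner 𝕜 (φ i) (φ i) = (S : 𝕜))
    (htight : gram 𝕜 φ * gram 𝕜 φ = (A : 𝕜) • gram 𝕜 φ)
    (hrank : (gram 𝕜 φ).rank + 1 = Fintype.card ι) :
    Fintype.card ι * S = A * (Fintype.card ι - 1) := by
  have htrace := trace_eq_mul_rank_of_mul_self_eq_smul (RCLike.ofReal_ne_zero.2 hA) htight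
  simp only [trace, diag_apply, gram_apply, hdiag, Finset.sum_const, Finset.card_univ,
    nsmul_eq_mul] at htrace
  have hcard : (Fintype.card ι : ℝ) - 1 = (gram 𝕜 φ).rank := by rw [← hrank]; simp
  rw [hcard]
  exact_mod_cast htrace

lemma IsETF.exists_gram_eq_smul_one_sub_vecMulVec [DecidableEq ι] {φ : ι → E} (hφ : IsETF 𝕜 φ)
    (hspan : Module.finrank 𝕜 (Submodule.span 𝕜 (Set.range φ)) + 1 = Fintype.card ι) :
    1 < Fintype.card ι ∧ ∃ C : ℝ, (∀ i j, i ≠ j → ‖inner 𝕜 (φ i) (φ j)‖ = C) ∧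
      ∃ u w : ι → 𝕜, (∀ i, u i * w i = C) ∧
        gram 𝕜 φ = (Fintype.card ι * C : 𝕜) • 1 - vecMulVec u w := by
  obtain ⟨⟨S, hS, hdiag⟩, ⟨C, -, hoff⟩, A, hA, htight⟩ := hφ
  have hsq : gram 𝕜 φ * gram 𝕜 φ = (A : 𝕜) • gram 𝕜 φ := Matrix.ext htight
  rw [← rank_gram] at hspan
  have htrace := card_mul_eq_mul_card_sub_one_of_tight hA.ne' hdiag hsq hspan
  have hcard : 1 < Fintype.card ι := by
    by_contra! hle
    have hone : Fintype.card ι = 1 := by omega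
    simp [hone, hS.ne'] at htrace
  obtain ⟨u, w, huw⟩ := exists_smul_one_sub_eq_vecMulVec hsq hspan
  obtain ⟨i, j, hij⟩ := Fintype.one_lt_card_iff.1 hcard
  have hcard' : (1 : ℝ) < Fintype.card ι := by exact_mod_cast hcard
  have hC : A - S = C :=
    sub_eq_of_smul_one_sub_gram_eq_vecMulVec hdiag hij (hoff i j hij) (by nlinarith [hcard']) huw
  have hAC : A = Fintype.card ι * C := by rw [← hC]; linear_combination htrace
  refine ⟨hcard, C, hoff, u, w, fun k ↦ ?_, ?_⟩
  · rw [mul_eq_sub_of_smul_one_sub_gram_eq_vecMulVec hdiag huw, hC]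
  · rw [← huw, hAC, RCLike.ofReal_mul, RCLike.ofReal_natCast, sub_sub_cancel]

end Simplices

namespace IsRegularSimplex

open Matrix

variable {𝕜 E ι : Type*} [RCLike 𝕜] [NormedAddCommGroup E] [InnerProductSpace 𝕜 E] [Fintype ι]
  {φ : ι → E} {K : Finset ι} {i j k : ι}

lemma exists_gram_eq_smul_one_sub_vecMulVec [DecidableEq ι] (hK : IsRegularSimplex 𝕜 φ K) :
    1 < K.card ∧ ∃ C : ℝ, (∀ i j : K, i ≠ j → ‖inner 𝕜 (φ i) (φ j)‖ = C) ∧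
      ∃ u w : K → 𝕜, (∀ i, u i * w i = C) ∧
        gram 𝕜 (fun i : K ↦ φ i) = (K.card * C : 𝕜) • 1 - vecMulVec u w := by
  have hrange : Set.range (fun i : K ↦ φ i) = φ '' K := by ext; simp
  simpa only [Fintype.card_coe] using
    hK.1.exists_gram_eq_smul_one_sub_vecMulVec (by rw [hrange, hK.2, Fintype.card_coe])

lemma one_lt_card (hK : IsRegularSimplex 𝕜 φ K) : 1 < K.card := by
  classical exact hK.exists_gram_eq_smul_one_sub_vecMulVec.1

lemma inner_self_eq (hK : IsRegularSimplex 𝕜 φ K) (hi : i ∈ K) (hj : j ∈ K) (hij : i ≠ j) :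
    inner 𝕜 (φ i) (φ i) = (K.card - 1) * (‖inner 𝕜 (φ i) (φ j)‖ : 𝕜) := by
  classical
  obtain ⟨-, C, hC, u, w, huw, hgram⟩ := hK.exists_gram_eq_smul_one_sub_vecMulVec
  lift i to K using hi
  lift j to K using hj
  calc inner 𝕜 (φ i) (φ i) = K.card * C * (1 : Matrix K K 𝕜) i i - u i * w i :=
        congrFun₂ hgram i i
    _ = (K.card - 1) * C := by rw [one_apply_eq, huw]; ring
    _ = (K.card - 1) * (‖inner 𝕜 (φ i) (φ j)‖ : 𝕜) := by rw [hC i j (Subtype.coe_ne_coe.1 hij)]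

lemma inner_mul_inner_mul_inner_eq (hK : IsRegularSimplex 𝕜 φ K) (hi : i ∈ K) (hj : j ∈ K)
    (hk : k ∈ K) (hij : i ≠ j) (hjk : j ≠ k) (hki : k ≠ i) :
    inner 𝕜 (φ i) (φ j) * inner 𝕜 (φ j) (φ k) * inner 𝕜 (φ k) (φ i) =
      -(‖inner 𝕜 (φ i) (φ j)‖ : 𝕜) ^ 3 := by
  classical
  obtain ⟨-, C, hC, u, w, huw, hgram⟩ := hK.exists_gram_eq_smul_one_sub_vecMulVec
  have hentry {a b : K} (hab : a ≠ b) : inner 𝕜 (φ a) (φ b) = -(u a * w b) := by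
    simpa [hab, vecMulVec_apply] using congrFun₂ hgram a b
  lift i to K using hi
  lift j to K using hj
  lift k to K using hk
  rw [Subtype.coe_ne_coe] at hij hjk hki
  calc inner 𝕜 (φ i) (φ j) * inner 𝕜 (φ j) (φ k) * inner 𝕜 (φ k) (φ i)
      = -((u i * w i) * (u j * w j) * (u k * w k)) := by
        rw [hentry hij, hentry hjk, hentry hki]; ring
    _ = -(‖inner 𝕜 (φ i) (φ j)‖ : 𝕜) ^ 3 := by rw [huw, huw, huw, hC i j hij]; ring

end IsRegularSimplex

lemma linearIndependent_of_apply_eq_one {R M ι : Type*} [CommRing R] [AddCommGroup M] [Module R M]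
    (B : M →ₗ[R] M →ₗ[R] R) {x : M} {u : ι → M} (hx : ∀ i, B x (u i) = 1)
    (hself : ∀ i, B (u i) (u i) = 0) (hne : Pairwise fun i j ↦ B (u i) (u j) = 1) :
    LinearIndependent R u :=
  .of_pairwise_dual_eq_zero_one u (fun i ↦ B (x - u i)) (fun i j hij ↦ by simp [hx, hne hij])
    fun i ↦ by simp [hx, hself]

section OddTriples

variable {V : Type*} [AddCommGroup V] [Module (ZMod 2) V]

/-- Every triple of distinct vectors in `K` is odd for `B`. When `B` is alternating, the quantity
`B (v₁ + v₃) (v₂ + v₃)` is the symmetric parity `B v₁ v₂ + B v₂ v₃ + B v₃ v₁`, so it does not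
matter which of the three vectors is used as the base point. -/
def HasOddTriples (B : V →ₗ[ZMod 2] V →ₗ[ZMod 2] ZMod 2) (K : Finset V) : Prop :=
  ∀ v₁ ∈ K, ∀ v₂ ∈ K, ∀ v₃ ∈ K, v₁ ≠ v₂ → v₂ ≠ v₃ → v₁ ≠ v₃ → B (v₁ + v₃) (v₂ + v₃) = 1

variable {B : V →ₗ[ZMod 2] V →ₗ[ZMod 2] ZMod 2}

lemma apply_add_add_eq_of_isAlt (hB : B.IsAlt) (v₁ v₂ v₃ : V) :
    B (v₁ + v₃) (v₂ + v₃) = B v₁ v₂ + B v₂ v₃ + B v₃ v₁ := by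
  have hsymm (x y : V) : B x y = B y x := by rw [← hB.neg y x, CharTwo.neg_eq]
  simp only [map_add, LinearMap.add_apply, hB.self_eq_zero, add_zero]
  rw [hsymm v₁ v₃, hsymm v₃ v₂, add_right_comm]

lemma HasOddTriples.card_le_finrank_add_two [FiniteDimensional (ZMod 2) V] (hB : B.IsAlt)
    {K : Finset V} (hK : HasOddTriples B K) :
    K.card ≤ Module.finrank (ZMod 2) V + 2 := by
  classical
  rcases le_or_gt K.card 1 with hcard | hcard
  · omega
  obtain ⟨a, ha, b, hb, hab⟩ := Finset.one_lt_card.1 hcard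
  let L := (K.erase a).erase b
  have hL {v : V} (hv : v ∈ L) : v ≠ b ∧ v ≠ a ∧ v ∈ K := by simpa [L] using hv
  have hpair {v w : V} (hv : v ∈ K) (hw : w ∈ L) (hvw : v ≠ w) (hva : v ≠ a) :
      B (v + a) (w + a) = 1 :=
    hK v hv w (hL hw).2.2 a ha hvw (hL hw).2.1 hva
  have hli : LinearIndependent (ZMod 2) fun v : L ↦ v.1 + a :=
    linearIndependent_of_apply_eq_one B (x := b + a)
      (fun v ↦ hpair hb v.2 (hL v.2).1.symm hab.symm)
      (fun v ↦ hB.self_eq_zero _)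
      (fun v w hvw ↦ hpair (hL v.2).2.2 w.2 (Subtype.coe_ne_coe.2 hvw) (hL v.2).2.1)
  have hle := hli.fintype_card_le_finrank
  rw [Fintype.card_coe, Finset.card_erase_of_mem (Finset.mem_erase.2 ⟨hab.symm, hb⟩),
    Finset.card_erase_of_mem ha] at hle
  omega

lemma neg_one_pow_val_add {R : Type*} [Ring R] (x y : ZMod 2) :
    (-1 : R) ^ (x + y).val = (-1) ^ x.val * (-1) ^ y.val := by
  rw [ZMod.val_add, ← neg_one_pow_eq_pow_mod_two, pow_add]

lemma eq_one_of_neg_one_pow_val_eq_neg_one {R : Type*} [Ring R] [CharZero R] {x : ZMod 2}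
    (hx : (-1 : R) ^ x.val = -1) : x = 1 := by
  refine Fin.eq_one_of_ne_zero x fun (hzero : x = (0 : ZMod 2)) ↦ ?_
  norm_num [hzero] at hx

variable {D : Finset V} {E : Type*} [NormedAddCommGroup E] [InnerProductSpace ℝ E] {ψ : D → E}
  (hoff : ∀ v₁ v₂ : D, v₁ ≠ v₂ → inner ℝ (ψ v₁) (ψ v₂) = (-1 : ℝ) ^ (B v₁.1 v₂.1).val)
include hoff

lemma card_eq_of_isRegularSimplex {n : ℕ} (hdiag : ∀ v, inner ℝ (ψ v) (ψ v) = (n + 1 : ℝ))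
    {K : Finset D} (hK : IsRegularSimplex ℝ ψ K) : K.card = n + 2 := by
  obtain ⟨v, hv, w, hw, hvw⟩ := Finset.one_lt_card.1 hK.one_lt_card
  have hself := hK.inner_self_eq hv hw hvw
  rw [hdiag, hoff v w hvw, norm_pow, norm_neg, norm_one, one_pow, RCLike.ofReal_one,
    mul_one] at hself
  have hcard : (K.card : ℝ) = (n + 2 : ℕ) := by push_cast; linear_combination -hself
  exact_mod_cast hcard

lemma hasOddTriples_of_isRegularSimplex (hB : B.IsAlt) {K : Finset D}
    (hK : IsRegularSimplex ℝ ψ K) : HasOddTriples B (K.map (.subtype _)) := by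
  simp only [HasOddTriples, Finset.forall_mem_map, Function.Embedding.subtype_apply]
  intro v₁ h₁ v₂ h₂ v₃ h₃ h₁₂ h₂₃ h₁₃
  rw [Subtype.coe_ne_coe] at h₁₂ h₂₃ h₁₃
  have htriple := hK.inner_mul_inner_mul_inner_eq h₁ h₂ h₃ h₁₂ h₂₃ h₁₃.symm
  rw [hoff _ _ h₁₂, hoff _ _ h₂₃, hoff _ _ h₁₃.symm, norm_pow, norm_neg, norm_one, one_pow,
    RCLike.ofReal_one, one_pow, ← neg_one_pow_val_add, ← neg_one_pow_val_add] at htriple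
  rw [apply_add_add_eq_of_isAlt hB]
  exact eq_one_of_neg_one_pow_val_eq_neg_one htriple

end OddTriples

lemma two_mul_lt_two_pow_sub_one {J : ℕ} (hJ : 4 < J) : 2 * J < 2 ^ (J - 1) := by
  induction J, hJ using Nat.le_induction with
  | base => norm_num
  | succ J hJ ih =>
    have hpow : 2 ^ J = 2 * 2 ^ (J - 1) := (mul_pow_sub_one (by omega) 2).symm
    rw [Nat.add_sub_cancel, hpow]
    omega

theorem binder_of_Tremain_type_ETF_empty_general
    {V : Type*} [AddCommGroup V] [Module (ZMod 2) V] [FiniteDimensional (ZMod 2) V]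
    {B : V →ₗ[ZMod 2] V →ₗ[ZMod 2] ZMod 2} (hB : B.IsAlt)
    {n : ℕ} (hn : Module.finrank (ZMod 2) V < n) (D : Finset V)
    {E : Type*} [NormedAddCommGroup E] [InnerProductSpace ℝ E] (ψ : D → E)
    (hdiag : ∀ v, inner ℝ (ψ v) (ψ v) = (n + 1 : ℝ))
    (hoff : ∀ v₁ v₂ : D, v₁ ≠ v₂ → inner ℝ (ψ v₁) (ψ v₂) = (-1 : ℝ) ^ (B v₁.1 v₂.1).val) :
    binder ℝ ψ = ∅ ∧
    ¬∃ K : Finset V, (∀ v ∈ K, v ∈ D) ∧ K.card = n + 2 ∧ HasOddTriples B K := by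
  have hbound {K : Finset V} (hK : HasOddTriples B K) : K.card ≠ n + 2 := by
    have hle := hK.card_le_finrank_add_two hB
    omega
  constructor
  · refine Set.eq_empty_iff_forall_notMem.2 fun K (hK : IsRegularSimplex ℝ ψ K) ↦ ?_
    refine hbound (hasOddTriples_of_isRegularSimplex hoff hB hK) ?_
    rw [Finset.card_map, card_eq_of_isRegularSimplex hoff hdiag hK]
  · rintro ⟨K, -, hcard, hK⟩
    exact hbound hK hcard

/-- For `J > 4`, the binder of the ETF `Ψ̂_D` (the dual of the
sub-ETF `Ψ_D` of the dual symplectic ETF, indexed by an affine quadric `D` of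
size `2^{J−1}(2^J+1)`) is empty; equivalently, there is no subset `K ⊆ D` with
`#K = 2^{J−1}+2` such that `B(v₁+v₃, v₂+v₃) = 1` for all pairwise distinct
`v₁, v₂, v₃ ∈ K`. -/
theorem binder_of_Tremain_type_ETF_empty
    {J : ℕ} (hJ : 4 < J)
    {V : Type*} [AddCommGroup V] [Module (ZMod 2) V] [Fintype V] [DecidableEq V]
    (hdim : Module.finrank (ZMod 2) V = 2 * J)
    (B : V →ₗ[ZMod 2] V →ₗ[ZMod 2] ZMod 2) (hB : IsSymplectic B)
    (D : Finset V) (hD : IsAffineQuadric B (D : Set V))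
    (hDcard : D.card = 2 ^ (J - 1) * (2 ^ J + 1))
    {E : Type*} [NormedAddCommGroup E] [InnerProductSpace ℝ E]
    (ψ : ↥D → E)
    (hdiag : ∀ v : ↥D, (inner ℝ (ψ v) (ψ v) : ℝ) = 2 ^ (J - 1) + 1)
    (hoff : ∀ v₁ v₂ : ↥D, v₁ ≠ v₂ →
      (inner ℝ (ψ v₁) (ψ v₂) : ℝ) = (-1 : ℝ) ^ (B v₁.1 v₂.1).val) :
    binder ℝ ψ = ∅ ∧
    ¬∃ K : Finset V, (∀ v ∈ K, v ∈ D) ∧ K.card = 2 ^ (J - 1) + 2 ∧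
      ∀ v₁ ∈ K, ∀ v₂ ∈ K, ∀ v₃ ∈ K,
        v₁ ≠ v₂ → v₂ ≠ v₃ → v₁ ≠ v₃ → B (v₁ + v₃) (v₂ + v₃) = 1 := by
  exact binder_of_Tremain_type_ETF_empty_general hB.1 (hdim ▸ two_mul_lt_two_pow_sub_one hJ) D ψ
    (by simpa only [Nat.cast_pow, Nat.cast_ofNat] using hdiag) hoff
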